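/- Strong data-processing inequality for locally private channels (KL and chi-squared form): Let α > 0 and let Q be an α-DP channel from Z to O. Then there exist a probability space (Ω, ρ) and a jointly measurable family (ℓ_ω)_{ω∈Ω} of measurable functions ℓ_ω : Z → [0,1] such that for all probability measures P₁, P₂ on Z: KL(Q∘P₁ ‖ Q∘P₂) ≤ χ²(Q∘P₁ ‖ Q∘P₂) ≤ (e^α − 1)² · E_{ω∼ρ}[ D_{ℓ_ω}(P₁,P₂)² ]. In particular, since D_ℓ(P₁,P₂) ≤ D_TV(P₁,P₂), one has KL(Q∘P₁ ‖ Q∘P₂) ≤ (e^α − 1)²·D_TV(P₁,P₂)². -/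

import Mathlib

/-!
The lattice infimum `ν = ⨅ z, Q z` satisfies `ν ≤ Q z ≤ e^α ν` for every `z`, because `e^{-α} Q z`
is a lower bound of the whole family. The pointwise infimum of the densities `q o z` would not do:
each `q · z` is only determined almost everywhere, and uncountably many null sets can make that
infimum vanish identically.

Hence `Q z` has the density `1 + (e^α - 1) ℓ_o(z)` with respect to `ν`, for test functions `ℓ_o`
with values in `[0, 1]`, and `Q∘P` has the density `g_P(o) = 1 + (e^α - 1) E_P[ℓ_o] ≥ 1`. So
`χ²(Q∘P₁ ‖ Q∘P₂) = ∫ (g_{P₁} - g_{P₂})² / g_{P₂} dν ≤ (e^α - 1)² ∫ D_{ℓ_o}(P₁, P₂)² dν(o)`,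
and normalizing `ν`, whose mass is at most `1`, only increases the right-hand side.

The bound `KL ≤ χ²` integrates `x log x + 1 - x ≤ (x - 1)²`, and `D_ℓ ≤ D_TV` follows from the
layer-cake formula.
-/

/-- A probability space `(Ω, ρ)` together with a jointly measurable family
`(ℓ_ω)_{ω ∈ Ω}` of measurable functions `ℓ_ω : Z → [0,1]`. -/
structure TestFamily.{u', v'} (Z : Type u') [MeasurableSpace Z] : Type (max u' (v' + 1)) where
  Ω : Type v'
  [mΩ : MeasurableSpace Ω]
  ρ : MeasureTheory.Measure Ω
  prob : MeasureTheory.IsProbabilityMeasure ρ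
  ℓ : Ω → Z → ℝ
  meas : Measurable (Function.uncurry ℓ)
  range01 : ∀ ω z, ℓ ω z ∈ Set.Icc (0 : ℝ) 1

open MeasureTheory ProbabilityTheory
open scoped ENNReal Classical

universe u v

instance {Z : Type u} [MeasurableSpace Z] (tf : TestFamily.{u, v} Z) :
    MeasurableSpace tf.Ω := tf.mΩ

/-- `D_ℓ(P, Q) := |E_{z ∼ P} ℓ(z) − E_{z ∼ Q} ℓ(z)|`. -/
noncomputable def Dl {Z : Type*} [MeasurableSpace Z] (ℓ : Z → ℝ) (P Q : Measure Z) : ℝ :=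
  |(∫ z, ℓ z ∂P) - ∫ z, ℓ z ∂Q|

/-- Kullback–Leibler divergence `KL(P‖Q) := ∫ log (dP/dQ) dP` when `P ≪ Q` (and the
log-likelihood ratio is integrable), `+∞` otherwise; valued in the extended reals. -/
noncomputable def klDiv' {O : Type*} [MeasurableSpace O] (P Q : Measure O) : EReal :=
  if P ≪ Q ∧ Integrable (fun o => Real.log ((P.rnDeriv Q) o).toReal) P then
    ((∫ o, Real.log ((P.rnDeriv Q) o).toReal ∂P : ℝ) : EReal)
  else ⊤

/-- Chi-squared divergence `χ²(P‖Q) := ∫ (dP/dQ − 1)² dQ` when `P ≪ Q`, `+∞` otherwise;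
valued in the extended reals. -/
noncomputable def chi2Div {O : Type*} [MeasurableSpace O] (P Q : Measure O) : EReal :=
  if P ≪ Q then
    ((∫⁻ o, ENNReal.ofReal ((((P.rnDeriv Q) o).toReal - 1) ^ 2) ∂Q : ℝ≥0∞) : EReal)
  else ⊤

/-- Total variation distance `D_TV(P,Q) := sup_E |P(E) − Q(E)|`. -/
noncomputable def TVdist {Z : Type*} [MeasurableSpace Z] (P Q : Measure Z) : ℝ :=
  ⨆ E : {E : Set Z // MeasurableSet E}, |(P E.1).toReal - (Q E.1).toReal|

section Divergences

variable {O : Type*} [MeasurableSpace O]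

lemma klFun_le_sub_one_sq {x : ℝ} (hx : 0 ≤ x) : InformationTheory.klFun x ≤ (x - 1) ^ 2 := by
  rcases hx.eq_or_lt with rfl | hx
  · simp [InformationTheory.klFun]
  calc InformationTheory.klFun x = x * Real.log x + 1 - x := rfl
    _ ≤ x * (x - 1) + 1 - x := by gcongr; exact Real.log_le_sub_one_of_pos hx
    _ = (x - 1) ^ 2 := by ring

lemma klDiv_le_lintegral_rnDeriv_sub_one_sq {P Q : Measure O} [IsFiniteMeasure P]
    [IsFiniteMeasure Q] (hPQ : P ≪ Q) :
    InformationTheory.klDiv P Q ≤ ∫⁻ o, ENNReal.ofReal (((P.rnDeriv Q o).toReal - 1) ^ 2) ∂Q := by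
  rw [InformationTheory.klDiv_eq_lintegral_klFun_of_ac hPQ]
  gcongr
  exact klFun_le_sub_one_sq ENNReal.toReal_nonneg

lemma klDiv'_eq_klDiv {P Q : Measure O} [IsFiniteMeasure P] [IsFiniteMeasure Q]
    (hPQ : P Set.univ = Q Set.univ) : klDiv' P Q = InformationTheory.klDiv P Q := by
  rw [klDiv']
  split_ifs with h
  · obtain ⟨hac, hint⟩ := h
    rw [← EReal.coe_ennreal_toReal (InformationTheory.klDiv_ne_top hac hint),
      InformationTheory.toReal_klDiv_of_measure_eq hac hPQ]
    rfl
  · rw [InformationTheory.klDiv_eq_top_iff.2 (not_and.1 h), EReal.coe_ennreal_top]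

lemma klDiv'_le_chi2Div {P Q : Measure O} [IsFiniteMeasure P] [IsFiniteMeasure Q]
    (hPQ : P Set.univ = Q Set.univ) : klDiv' P Q ≤ chi2Div P Q := by
  rw [klDiv'_eq_klDiv hPQ, chi2Div]
  split_ifs with hac
  · exact EReal.coe_ennreal_le_coe_ennreal_iff.2 (klDiv_le_lintegral_rnDeriv_sub_one_sq hac)
  · exact le_top

variable {ν : Measure O} [SigmaFinite ν] {f g : O → ℝ}

lemma toReal_rnDeriv_withDensity_withDensity (hf : Measurable f) (hg : Measurable g)
    (hf_nonneg : ∀ o, 0 ≤ f o) (hg_pos : ∀ o, 0 < g o) :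
    ∀ᵐ o ∂ν, ((ν.withDensity fun o => ENNReal.ofReal (f o)).rnDeriv
      (ν.withDensity fun o => ENNReal.ofReal (g o)) o).toReal = f o / g o := by
  filter_upwards [Measure.rnDeriv_withDensity_right (ν.withDensity fun o => ENNReal.ofReal (f o)) ν
      hg.ennreal_ofReal.aemeasurable (ae_of_all _ fun o => by simp [hg_pos o])
      (ae_of_all _ fun _ => ENNReal.ofReal_ne_top),
    Measure.rnDeriv_withDensity ν hf.ennreal_ofReal] with o h_right h_left
  rw [h_right, h_left, ENNReal.toReal_mul, ENNReal.toReal_inv, ENNReal.toReal_ofReal (hf_nonneg o),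
    ENNReal.toReal_ofReal (hg_pos o).le, inv_mul_eq_div]

lemma chi2Div_withDensity (hf : Measurable f) (hg : Measurable g)
    (hf_nonneg : ∀ o, 0 ≤ f o) (hg_pos : ∀ o, 0 < g o) :
    chi2Div (ν.withDensity fun o => ENNReal.ofReal (f o))
        (ν.withDensity fun o => ENNReal.ofReal (g o)) =
      ((∫⁻ o, ENNReal.ofReal ((f o - g o) ^ 2 / g o) ∂ν : ℝ≥0∞) : EReal) := by
  have hac : ν.withDensity (fun o => ENNReal.ofReal (f o)) ≪
      ν.withDensity fun o => ENNReal.ofReal (g o) :=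
    (withDensity_absolutelyContinuous _ _).trans <|
      withDensity_absolutelyContinuous' hg.ennreal_ofReal.aemeasurable
        (ae_of_all _ fun o => by simp [hg_pos o])
  rw [chi2Div, if_pos hac, lintegral_withDensity_eq_lintegral_mul _ hg.ennreal_ofReal (by fun_prop)]
  congr 1
  refine lintegral_congr_ae ?_
  filter_upwards [toReal_rnDeriv_withDensity_withDensity hf hg hf_nonneg hg_pos] with o ho
  have hgo := (hg_pos o).ne'
  rw [Pi.mul_apply, ho, ← ENNReal.ofReal_mul (hg_pos o).le]
  congr 1
  field_simp

lemma chi2Div_withDensity_le (hf : Measurable f) (hg : Measurable g)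
    (hf_nonneg : ∀ o, 0 ≤ f o) (hg_one : ∀ o, 1 ≤ g o) :
    chi2Div (ν.withDensity fun o => ENNReal.ofReal (f o))
        (ν.withDensity fun o => ENNReal.ofReal (g o)) ≤
      ((∫⁻ o, ENNReal.ofReal ((f o - g o) ^ 2) ∂ν : ℝ≥0∞) : EReal) := by
  rw [chi2Div_withDensity hf hg hf_nonneg fun o => zero_lt_one.trans_le (hg_one o),
    EReal.coe_ennreal_le_coe_ennreal_iff]
  gcongr with o
  exact div_le_self (sq_nonneg _) (hg_one o)

end Divergences

section TotalVariation

variable {Z : Type*} [MeasurableSpace Z]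

lemma abs_measureReal_sub_le_TVdist (P₁ P₂ : Measure Z) [IsFiniteMeasure P₁] [IsFiniteMeasure P₂]
    {E : Set Z} (hE : MeasurableSet E) : |P₁.real E - P₂.real E| ≤ TVdist P₁ P₂ := by
  refine le_ciSup (f := fun E : {E : Set Z // MeasurableSet E} => |P₁.real E.1 - P₂.real E.1|)
    ⟨P₁.real Set.univ + P₂.real Set.univ, ?_⟩ ⟨E, hE⟩
  rintro _ ⟨E, rfl⟩
  calc |P₁.real E.1 - P₂.real E.1| ≤ |P₁.real E.1| + |P₂.real E.1| := abs_sub _ _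
    _ = P₁.real E.1 + P₂.real E.1 := by simp only [abs_of_nonneg measureReal_nonneg]
    _ ≤ P₁.real Set.univ + P₂.real Set.univ := by gcongr <;> simp

lemma integrableOn_measureReal_setOf_le (P : Measure Z) [IsFiniteMeasure P] (ℓ : Z → ℝ) (a b : ℝ) :
    IntegrableOn (fun t => P.real {z | t ≤ ℓ z}) (Set.Ioc a b) := by
  have h_anti : Antitone fun t => P.real {z | t ≤ ℓ z} :=
    fun s t hst => measureReal_mono fun z (hz : t ≤ ℓ z) => hst.trans hz
  exact .of_mem_Icc 0 (P.real Set.univ) h_anti.measurable.aemeasurable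
    (ae_of_all _ fun t => ⟨measureReal_nonneg, measureReal_mono (Set.subset_univ _)⟩)

lemma integral_eq_setIntegral_measureReal_setOf_le {P : Measure Z} [IsFiniteMeasure P] {ℓ : Z → ℝ}
    (hℓ : Measurable ℓ) (h01 : ∀ z, ℓ z ∈ Set.Icc (0 : ℝ) 1) :
    ∫ z, ℓ z ∂P = ∫ t in Set.Ioc (0 : ℝ) 1, P.real {z | t ≤ ℓ z} :=
  (Integrable.of_mem_Icc 0 1 hℓ.aemeasurable (ae_of_all _ h01)).integral_eq_integral_Ioc_meas_le
    (ae_of_all _ fun z => (h01 z).1) (ae_of_all _ fun z => (h01 z).2)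

lemma Dl_le_TVdist {P₁ P₂ : Measure Z} [IsFiniteMeasure P₁] [IsFiniteMeasure P₂] {ℓ : Z → ℝ}
    (hℓ : Measurable ℓ) (h01 : ∀ z, ℓ z ∈ Set.Icc (0 : ℝ) 1) : Dl ℓ P₁ P₂ ≤ TVdist P₁ P₂ := by
  rw [Dl, integral_eq_setIntegral_measureReal_setOf_le hℓ h01,
    integral_eq_setIntegral_measureReal_setOf_le hℓ h01,
    ← integral_sub (integrableOn_measureReal_setOf_le P₁ ℓ 0 1)
      (integrableOn_measureReal_setOf_le P₂ ℓ 0 1)]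
  have h_level (t : ℝ) : |P₁.real {z | t ≤ ℓ z} - P₂.real {z | t ≤ ℓ z}| ≤ TVdist P₁ P₂ :=
    abs_measureReal_sub_le_TVdist P₁ P₂ (measurableSet_le measurable_const hℓ)
  simpa using norm_setIntegral_le_of_norm_le_const (μ := volume) (s := Set.Ioc (0 : ℝ) 1)
    (f := fun t => P₁.real {z | t ≤ ℓ z} - P₂.real {z | t ≤ ℓ z}) (by simp) fun t _ => h_level t

end TotalVariation

namespace TestFamily

variable {Z : Type u} [MeasurableSpace Z] (tf : TestFamily.{u, v} Z)

instance : IsProbabilityMeasure tf.ρ := tf.prob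

instance : Nonempty (TestFamily.{u, v} Z) :=
  ⟨{ Ω := PUnit
     ρ := Measure.dirac PUnit.unit
     prob := inferInstance
     ℓ := fun _ _ => 0
     meas := measurable_const
     range01 := by simp }⟩

lemma integral_Dl_sq_le_TVdist_sq (P₁ P₂ : Measure Z) [IsFiniteMeasure P₁] [IsFiniteMeasure P₂] :
    ∫ ω, Dl (tf.ℓ ω) P₁ P₂ ^ 2 ∂tf.ρ ≤ TVdist P₁ P₂ ^ 2 := by
  have h_le (ω : tf.Ω) : Dl (tf.ℓ ω) P₁ P₂ ^ 2 ≤ TVdist P₁ P₂ ^ 2 :=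
    pow_le_pow_left₀ (abs_nonneg _) (Dl_le_TVdist tf.meas.of_uncurry_left (tf.range01 ω)) 2
  calc ∫ ω, Dl (tf.ℓ ω) P₁ P₂ ^ 2 ∂tf.ρ ≤ ∫ _, TVdist P₁ P₂ ^ 2 ∂tf.ρ :=
        integral_mono_of_nonneg (ae_of_all _ fun _ => sq_nonneg _) (integrable_const _)
          (ae_of_all _ h_le)
    _ = TVdist P₁ P₂ ^ 2 := by simp

end TestFamily

section ReferenceMeasure

variable {O : Type*} [MeasurableSpace O]

lemma le_smul_iInf_of_forall_le_smul {ι : Type*} {m : ι → Measure O} {c : ℝ≥0∞} (hc₀ : c ≠ 0)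
    (hc : c ≠ ∞) (hm : ∀ i j, m i ≤ c • m j) (i : ι) : m i ≤ c • ⨅ j, m j := by
  have h_inv : c⁻¹ • m i ≤ ⨅ j, m j := le_iInf fun j => by
    calc c⁻¹ • m i ≤ c⁻¹ • c • m j := by gcongr; exact hm i j
      _ = m j := by rw [smul_smul, ENNReal.inv_mul_cancel hc₀ hc, one_smul]
  calc m i = c • c⁻¹ • m i := by rw [smul_smul, ENNReal.mul_inv_cancel hc₀ hc, one_smul]
    _ ≤ c • ⨅ j, m j := by gcongr

lemma ae_le_of_withDensity_le_withDensity {μ : Measure O} [SigmaFinite μ] {f g : O → ℝ≥0∞}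
    (hf : Measurable f) (hfg : μ.withDensity f ≤ μ.withDensity g) : f ≤ᵐ[μ] g :=
  ae_le_of_forall_setLIntegral_le_of_sigmaFinite hf fun s hs _ => by
    simpa only [withDensity_apply _ hs] using hfg s

/-- The test function value `ℓ` with `a / b = 1 + (C - 1) ℓ`, for a likelihood ratio `a / b` in
`[1, C]`. It is clamped to `[0, 1]` because the bounds on the ratio only hold almost everywhere.
At `C = 1` division by zero makes it `0`, which is consistent with `a / b = 1`. -/
noncomputable def clampedRatio (C : ℝ) (a b : ℝ≥0∞) : ℝ :=
  Set.projIcc (0 : ℝ) 1 zero_le_one (((a / b).toReal - 1) / (C - 1))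

lemma clampedRatio_mem_Icc (C : ℝ) (a b : ℝ≥0∞) : clampedRatio C a b ∈ Set.Icc (0 : ℝ) 1 :=
  Subtype.coe_prop _

lemma measurable_clampedRatio {X : Type*} [MeasurableSpace X] (C : ℝ) {a b : X → ℝ≥0∞}
    (ha : Measurable a) (hb : Measurable b) : Measurable fun x => clampedRatio C (a x) (b x) :=
  (continuous_subtype_val.comp continuous_projIcc).measurable.comp
    (((ha.div hb).ennreal_toReal.sub_const 1).div_const (C - 1))

lemma one_add_mul_projIcc_div {C t : ℝ} (ht : t ∈ Set.Icc 1 C) :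
    1 + (C - 1) * Set.projIcc (0 : ℝ) 1 zero_le_one ((t - 1) / (C - 1)) = t := by
  obtain ⟨h1t, htC⟩ := ht
  have h_mem : (t - 1) / (C - 1) ∈ Set.Icc (0 : ℝ) 1 :=
    ⟨by apply div_nonneg <;> linarith, div_le_one_of_le₀ (by linarith) (by linarith)⟩
  rw [Set.projIcc_of_mem _ h_mem, mul_div_cancel_of_imp' fun hC => by linarith]
  ring

lemma mul_ofReal_one_add_clampedRatio {C : ℝ} {a b : ℝ≥0∞} (hb : b ≠ ∞) (hba : b ≤ a)
    (hab : a ≤ ENNReal.ofReal C * b) :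
    b * ENNReal.ofReal (1 + (C - 1) * clampedRatio C a b) = a := by
  rcases eq_or_ne b 0 with rfl | hb₀
  · simp_all
  have h_le : a / b ≤ ENNReal.ofReal C := ENNReal.div_le_of_le_mul hab
  have h_ge : 1 ≤ a / b := by rwa [ENNReal.le_div_iff_mul_le (.inl hb₀) (.inl hb), one_mul]
  have hC : 0 ≤ C := zero_le_one.trans (ENNReal.one_le_ofReal.1 (h_ge.trans h_le))
  have h_ne_top : a / b ≠ ∞ := ne_top_of_le_ne_top ENNReal.ofReal_ne_top h_le
  have h_mem : (a / b).toReal ∈ Set.Icc 1 C :=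
    ⟨by simpa using ENNReal.toReal_mono h_ne_top h_ge, ENNReal.toReal_le_of_le_ofReal hC h_le⟩
  rw [clampedRatio, one_add_mul_projIcc_div h_mem, ENNReal.ofReal_toReal h_ne_top,
    ENNReal.mul_div_cancel hb₀ hb]

lemma withDensity_eq_withDensity_clampedRatio {μ ν : Measure O} [SigmaFinite μ] [SigmaFinite ν]
    {C : ℝ} {f : O → ℝ≥0∞} (hf : Measurable f) (h_le : ν ≤ μ.withDensity f)
    (h_ge : μ.withDensity f ≤ ENNReal.ofReal C • ν) :
    μ.withDensity f = ν.withDensity fun o =>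
      ENNReal.ofReal (1 + (C - 1) * clampedRatio C (f o) (ν.rnDeriv μ o)) := by
  have hν : μ.withDensity (ν.rnDeriv μ) = ν := Measure.withDensity_rnDeriv_eq _ _ <|
    (Measure.absolutelyContinuous_of_le h_le).trans (withDensity_absolutelyContinuous _ _)
  have h_rnDeriv_le : ν.rnDeriv μ ≤ᵐ[μ] f :=
    ae_le_of_withDensity_le_withDensity (Measure.measurable_rnDeriv _ _) (by rwa [hν])
  have h_le_rnDeriv : f ≤ᵐ[μ] ENNReal.ofReal C • ν.rnDeriv μ :=
    ae_le_of_withDensity_le_withDensity hf <| by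
      rwa [withDensity_smul _ (Measure.measurable_rnDeriv _ _), hν]
  have h_meas : Measurable fun o =>
      ENNReal.ofReal (1 + (C - 1) * clampedRatio C (f o) (ν.rnDeriv μ o)) :=
    (((measurable_clampedRatio C hf (Measure.measurable_rnDeriv _ _)).const_mul _).const_add
      1).ennreal_ofReal
  conv_rhs => enter [1]; rw [← hν]
  rw [← withDensity_mul _ (Measure.measurable_rnDeriv _ _) h_meas]
  refine withDensity_congr_ae ?_
  filter_upwards [h_rnDeriv_le, h_le_rnDeriv, Measure.rnDeriv_lt_top ν μ] with o hle hge hlt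
  exact (mul_ofReal_one_add_clampedRatio hlt.ne hle hge).symm

end ReferenceMeasure

section Mixture

variable {Z O : Type*} [MeasurableSpace Z] [MeasurableSpace O] {ν : Measure O}

lemma bind_eq_withDensity_lintegral [SFinite ν] {κ : Kernel Z O} {f : O → Z → ℝ≥0∞}
    (hf : Measurable (Function.uncurry f)) (hκ : ∀ z, κ z = ν.withDensity fun o => f o z)
    (P : Measure Z) [SFinite P] :
    P.bind κ = ν.withDensity fun o => ∫⁻ z, f o z ∂P := by
  ext E hE
  simp_rw [Measure.bind_apply hE κ.aemeasurable, withDensity_apply _ hE, hκ, withDensity_apply _ hE]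
  exact lintegral_lintegral_swap (hf.comp measurable_swap).aemeasurable

lemma lintegral_ofReal_one_add_mul {P : Measure Z} [IsProbabilityMeasure P] {ℓ : Z → ℝ}
    (hℓ : Integrable ℓ P) (hℓ_nonneg : ∀ z, 0 ≤ ℓ z) {c : ℝ} (hc : 0 ≤ c) :
    ∫⁻ z, ENNReal.ofReal (1 + c * ℓ z) ∂P = ENNReal.ofReal (1 + c * ∫ z, ℓ z ∂P) := by
  have h_int : Integrable (fun z => 1 + c * ℓ z) P := (integrable_const 1).add (hℓ.const_mul c)
  rw [← ofReal_integral_eq_lintegral_ofReal h_int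
      (ae_of_all _ fun z => add_nonneg zero_le_one (mul_nonneg hc (hℓ_nonneg z))),
    integral_add (integrable_const 1) (hℓ.const_mul c), integral_const_mul]
  simp

lemma measurable_Dl {ℓ : O → Z → ℝ} (hℓ : Measurable (Function.uncurry ℓ)) (P₁ P₂ : Measure Z)
    [SFinite P₁] [SFinite P₂] : Measurable fun o => Dl (ℓ o) P₁ P₂ :=
  (hℓ.stronglyMeasurable.integral_prod_right.measurable.sub
    hℓ.stronglyMeasurable.integral_prod_right.measurable).abs

lemma integrable_Dl_sq [IsFiniteMeasure ν] {ℓ : O → Z → ℝ} (hℓ : Measurable (Function.uncurry ℓ))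
    (h01 : ∀ o z, ℓ o z ∈ Set.Icc (0 : ℝ) 1) (P₁ P₂ : Measure Z) [IsFiniteMeasure P₁]
    [IsFiniteMeasure P₂] : Integrable (fun o => Dl (ℓ o) P₁ P₂ ^ 2) ν :=
  .of_mem_Icc 0 (TVdist P₁ P₂ ^ 2) ((measurable_Dl hℓ P₁ P₂).pow_const 2).aemeasurable
    (ae_of_all _ fun o => ⟨sq_nonneg _,
      pow_le_pow_left₀ (abs_nonneg _) (Dl_le_TVdist hℓ.of_uncurry_left (h01 o)) 2⟩)

lemma bind_eq_withDensity_one_add_mul_integral [SFinite ν] {κ : Kernel Z O} {ℓ : O → Z → ℝ} {c : ℝ}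
    (hc : 0 ≤ c) (hℓ : Measurable (Function.uncurry ℓ))
    (h01 : ∀ o z, ℓ o z ∈ Set.Icc (0 : ℝ) 1)
    (hκ : ∀ z, κ z = ν.withDensity fun o => ENNReal.ofReal (1 + c * ℓ o z))
    (P : Measure Z) [IsProbabilityMeasure P] :
    P.bind κ = ν.withDensity fun o => ENNReal.ofReal (1 + c * ∫ z, ℓ o z ∂P) := by
  rw [bind_eq_withDensity_lintegral ((hℓ.const_mul c).const_add 1).ennreal_ofReal hκ]
  congr 1 with o
  exact lintegral_ofReal_one_add_mul
    (.of_mem_Icc 0 1 hℓ.of_uncurry_left.aemeasurable (ae_of_all _ (h01 o)))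
    (fun z => (h01 o z).1) hc

lemma chi2Div_bind_le [IsFiniteMeasure ν] {κ : Kernel Z O} {ℓ : O → Z → ℝ} {c : ℝ} (hc : 0 ≤ c)
    (hℓ : Measurable (Function.uncurry ℓ)) (h01 : ∀ o z, ℓ o z ∈ Set.Icc (0 : ℝ) 1)
    (hκ : ∀ z, κ z = ν.withDensity fun o => ENNReal.ofReal (1 + c * ℓ o z))
    (P₁ P₂ : Measure Z) [IsProbabilityMeasure P₁] [IsProbabilityMeasure P₂] :
    chi2Div (P₁.bind κ) (P₂.bind κ) ≤ ((c ^ 2 * ∫ o, Dl (ℓ o) P₁ P₂ ^ 2 ∂ν : ℝ) : EReal) := by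
  have h_meas (P : Measure Z) [IsProbabilityMeasure P] :
      Measurable fun o => 1 + c * ∫ z, ℓ o z ∂P :=
    (hℓ.stronglyMeasurable.integral_prod_right.measurable.const_mul c).const_add 1
  have h_one_le (P : Measure Z) (o : O) : 1 ≤ 1 + c * ∫ z, ℓ o z ∂P :=
    le_add_of_nonneg_right (mul_nonneg hc (integral_nonneg fun z => (h01 o z).1))
  have h_sq (o : O) : ((1 + c * ∫ z, ℓ o z ∂P₁) - (1 + c * ∫ z, ℓ o z ∂P₂)) ^ 2 =
      c ^ 2 * Dl (ℓ o) P₁ P₂ ^ 2 := by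
    rw [Dl, sq_abs]
    ring
  have h_nonneg (o : O) : 0 ≤ c ^ 2 * Dl (ℓ o) P₁ P₂ ^ 2 := by positivity
  calc chi2Div (P₁.bind κ) (P₂.bind κ)
      ≤ ((∫⁻ o, ENNReal.ofReal (c ^ 2 * Dl (ℓ o) P₁ P₂ ^ 2) ∂ν : ℝ≥0∞) : EReal) := by
        simp_rw [bind_eq_withDensity_one_add_mul_integral hc hℓ h01 hκ, ← h_sq]
        exact chi2Div_withDensity_le (h_meas P₁) (h_meas P₂)
          (fun o => zero_le_one.trans (h_one_le P₁ o)) (h_one_le P₂)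
    _ = ((c ^ 2 * ∫ o, Dl (ℓ o) P₁ P₂ ^ 2 ∂ν : ℝ) : EReal) := by
        rw [← integral_const_mul, ← ofReal_integral_eq_lintegral_ofReal
            ((integrable_Dl_sq hℓ h01 P₁ P₂).const_mul _) (ae_of_all _ h_nonneg),
          EReal.coe_ennreal_ofReal, max_eq_left (integral_nonneg h_nonneg)]

lemma integral_le_integral_inv_measure_univ_smul (hν : ν Set.univ ≤ 1) {f : O → ℝ}
    (hf : 0 ≤ f) : ∫ o, f o ∂ν ≤ ∫ o, f o ∂((ν Set.univ)⁻¹ • ν) := by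
  rcases eq_zero_or_neZero ν with rfl | _
  · simp
  have h_one_le : 1 ≤ ((ν Set.univ)⁻¹).toReal := by
    simpa using ENNReal.toReal_mono (ENNReal.inv_ne_top.2 (NeZero.ne (ν Set.univ)))
      (ENNReal.one_le_inv.2 hν)
  rw [integral_smul_measure]
  exact le_mul_of_one_le_left (integral_nonneg hf) h_one_le

end Mixture

section Channel

variable {Z : Type u} {O : Type v} [MeasurableSpace Z] [MeasurableSpace O]

lemma exists_testFamily_of_withDensity {κ : Kernel Z O} {ν : Measure O} [NeZero ν]
    (hν : ν Set.univ ≤ 1) {ℓ : O → Z → ℝ} {c : ℝ} (hc : 0 ≤ c)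
    (hℓ : Measurable (Function.uncurry ℓ)) (h01 : ∀ o z, ℓ o z ∈ Set.Icc (0 : ℝ) 1)
    (hκ : ∀ z, κ z = ν.withDensity fun o => ENNReal.ofReal (1 + c * ℓ o z)) :
    ∃ tf : TestFamily.{u, v} Z, ∀ P₁ P₂ : Measure Z,
      IsProbabilityMeasure P₁ → IsProbabilityMeasure P₂ →
        chi2Div (P₁.bind κ) (P₂.bind κ) ≤
          ((c ^ 2 * ∫ ω, Dl (tf.ℓ ω) P₁ P₂ ^ 2 ∂tf.ρ : ℝ) : EReal) := by
  have : IsFiniteMeasure ν := ⟨hν.trans_lt ENNReal.one_lt_top⟩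
  refine ⟨⟨O, (ν Set.univ)⁻¹ • ν, inferInstance, ℓ, hℓ, h01⟩, fun P₁ P₂ _ _ => ?_⟩
  refine (chi2Div_bind_le hc hℓ h01 hκ P₁ P₂).trans (EReal.coe_le_coe_iff.2 ?_)
  exact mul_le_mul_of_nonneg_left
    (integral_le_integral_inv_measure_univ_smul hν fun o => sq_nonneg _) (sq_nonneg c)

lemma exists_testFamily_chi2Div_bind_le {C : ℝ} {κ : Kernel Z O} [IsMarkovKernel κ]
    (hκ : ∀ z z', κ z ≤ ENNReal.ofReal C • κ z') {μ : Measure O} [SigmaFinite μ]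
    {q : O → Z → ℝ≥0∞} (hq : Measurable (Function.uncurry q))
    (hdens : ∀ z, κ z = μ.withDensity fun o => q o z) :
    ∃ tf : TestFamily.{u, v} Z, ∀ P₁ P₂ : Measure Z,
      IsProbabilityMeasure P₁ → IsProbabilityMeasure P₂ →
        chi2Div (P₁.bind κ) (P₂.bind κ) ≤
          (((C - 1) ^ 2 * ∫ ω, Dl (tf.ℓ ω) P₁ P₂ ^ 2 ∂tf.ρ : ℝ) : EReal) := by
  rcases isEmpty_or_nonempty Z with hZ | ⟨⟨z₀⟩⟩
  · obtain ⟨tf⟩ : Nonempty (TestFamily.{u, v} Z) := inferInstance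
    exact ⟨tf, fun P₁ _ _ _ => isEmptyElim (nonempty_of_isProbabilityMeasure P₁).some⟩
  have hC : 1 ≤ C := by simpa using hκ z₀ z₀ Set.univ
  have h_ge (z : Z) : κ z ≤ ENNReal.ofReal C • ⨅ z, κ z :=
    le_smul_iInf_of_forall_le_smul (by simpa using zero_lt_one.trans_le hC) ENNReal.ofReal_ne_top
      hκ z
  have h_mass : (⨅ z, κ z) Set.univ ≤ 1 := (iInf_le κ z₀ Set.univ).trans prob_le_one
  have : NeZero (⨅ z, κ z) := ⟨fun h => by simpa [h] using h_ge z₀ Set.univ⟩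
  have : IsFiniteMeasure (⨅ z, κ z) := ⟨h_mass.trans_lt ENNReal.one_lt_top⟩
  refine exists_testFamily_of_withDensity h_mass (sub_nonneg.2 hC)
    (ℓ := fun o z => clampedRatio C (q o z) ((⨅ z, κ z).rnDeriv μ o))
    (measurable_clampedRatio C hq ((Measure.measurable_rnDeriv _ _).comp measurable_fst))
    (fun o z => clampedRatio_mem_Icc _ _ _) fun z => (hdens z).trans ?_
  exact withDensity_eq_withDensity_clampedRatio hq.of_uncurry_right
    (hdens z ▸ iInf_le κ z) (hdens z ▸ h_ge z)

end Channel

theorem strong_data_processing_kl_chi2_general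
    {Z : Type u} {O : Type v} [MeasurableSpace Z] [MeasurableSpace O]
    (α : ℝ)
    (Q : Kernel Z O) [IsMarkovKernel Q]
    (hDP : ∀ z z' : Z, ∀ E : Set O, MeasurableSet E →
      Q z E ≤ ENNReal.ofReal (Real.exp α) * Q z' E)
    (μ : Measure O) [SigmaFinite μ] (q : O → Z → ℝ≥0∞)
    (hq : Measurable (Function.uncurry q))
    (hdens : ∀ z : Z, Q z = μ.withDensity fun o => q o z) :
    (∃ tf : TestFamily.{u, v} Z,
      ∀ P₁ P₂ : Measure Z, IsProbabilityMeasure P₁ → IsProbabilityMeasure P₂ →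
        klDiv' (P₁.bind fun z => Q z) (P₂.bind fun z => Q z) ≤
          chi2Div (P₁.bind fun z => Q z) (P₂.bind fun z => Q z) ∧
        chi2Div (P₁.bind fun z => Q z) (P₂.bind fun z => Q z) ≤
          (((Real.exp α - 1) ^ 2 : ℝ) : EReal) *
            ((∫ ω, (Dl (tf.ℓ ω) P₁ P₂) ^ 2 ∂tf.ρ : ℝ) : EReal)) ∧
    ∀ P₁ P₂ : Measure Z, IsProbabilityMeasure P₁ → IsProbabilityMeasure P₂ →
      klDiv' (P₁.bind fun z => Q z) (P₂.bind fun z => Q z) ≤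
        (((Real.exp α - 1) ^ 2 * TVdist P₁ P₂ ^ 2 : ℝ) : EReal) := by
  obtain ⟨tf, h_chi2⟩ := exists_testFamily_chi2Div_bind_le
    (fun z z' => Measure.le_iff.2 (hDP z z')) hq hdens
  have h_kl (P₁ P₂ : Measure Z) [IsProbabilityMeasure P₁] [IsProbabilityMeasure P₂] :
      klDiv' (P₁.bind Q) (P₂.bind Q) ≤ chi2Div (P₁.bind Q) (P₂.bind Q) :=
    klDiv'_le_chi2Div (by simp only [measure_univ])
  refine ⟨⟨tf, fun P₁ P₂ hP₁ hP₂ => ⟨h_kl P₁ P₂, ?_⟩⟩, fun P₁ P₂ hP₁ hP₂ => ?_⟩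
  · simpa only [EReal.coe_mul] using h_chi2 P₁ P₂ hP₁ hP₂
  · refine (h_kl P₁ P₂).trans <| (h_chi2 P₁ P₂ hP₁ hP₂).trans <| EReal.coe_le_coe_iff.2 ?_
    gcongr
    exact tf.integral_Dl_sq_le_TVdist_sq P₁ P₂

/-- **Strong data-processing inequality for locally private channels (KL and χ² form).**
If `Q` is an `α`-DP channel from `Z` to `O` (admitting jointly measurable densities with
respect to a σ-finite measure `μ` on `O`, with measurable pointwise infimum), then there is
a probability space `(Ω, ρ)` and a jointly measurable family `(ℓ_ω)` of `[0,1]`-valued test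
functions on `Z` such that for all probability measures `P₁, P₂` on `Z`,
`KL(Q∘P₁ ‖ Q∘P₂) ≤ χ²(Q∘P₁ ‖ Q∘P₂) ≤ (e^α − 1)² E_ρ[D_{ℓ_ω}(P₁,P₂)²]`;
in particular `KL(Q∘P₁ ‖ Q∘P₂) ≤ (e^α − 1)² D_TV(P₁,P₂)²`. -/
theorem strong_data_processing_kl_chi2
    {Z : Type u} {O : Type v} [MeasurableSpace Z] [MeasurableSpace O]
    (α : ℝ) (hα : 0 < α)
    (Q : Kernel Z O) [IsMarkovKernel Q]
    (hDP : ∀ z z' : Z, ∀ E : Set O, MeasurableSet E →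
      Q z E ≤ ENNReal.ofReal (Real.exp α) * Q z' E)
    (μ : Measure O) [SigmaFinite μ] (q : O → Z → ℝ≥0∞)
    (hq : Measurable (Function.uncurry q))
    (hdens : ∀ z : Z, Q z = μ.withDensity fun o => q o z)
    (hinf : Measurable fun o => ⨅ z : Z, q o z) :
    (∃ tf : TestFamily.{u, v} Z,
      ∀ P₁ P₂ : Measure Z, IsProbabilityMeasure P₁ → IsProbabilityMeasure P₂ →
        klDiv' (P₁.bind fun z => Q z) (P₂.bind fun z => Q z) ≤
          chi2Div (P₁.bind fun z => Q z) (P₂.bind fun z => Q z) ∧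
        chi2Div (P₁.bind fun z => Q z) (P₂.bind fun z => Q z) ≤
          (((Real.exp α - 1) ^ 2 : ℝ) : EReal) *
            ((∫ ω, (Dl (tf.ℓ ω) P₁ P₂) ^ 2 ∂tf.ρ : ℝ) : EReal)) ∧
    ∀ P₁ P₂ : Measure Z, IsProbabilityMeasure P₁ → IsProbabilityMeasure P₂ →
      klDiv' (P₁.bind fun z => Q z) (P₂.bind fun z => Q z) ≤
        (((Real.exp α - 1) ^ 2 * TVdist P₁ P₂ ^ 2 : ℝ) : EReal) :=
  strong_data_processing_kl_chi2_general α Q hDP μ q hq hdens
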